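/- Let Ω ⊂ ℝⁿ be a bounded open set with finite perimeter and let u be a non-negative function in BV₀(Ω). Define G(s) := |D(u − u*(s))₊|(ℝⁿ) for s ∈ [0,∞), let σ be the positive Radon measure on [0,∞) with G(s) = σ((0,s]) for all s, and define v(s) := ∫_{(s,∞)} (n ω_n^{1/n} τ^{1−1/n})^{−1} dσ(τ). Then u*(s) ≤ v(s) for almost every s ∈ [0,∞). -/

import Mathlib

open MeasureTheory Filter Set Metric
open scoped ENNReal NNReal RealInnerProductSpace Topology

noncomputable section

def diverg {n : ℕ} (φ : EuclideanSpace ℝ (Fin n) → EuclideanSpace ℝ (Fin n))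
    (x : EuclideanSpace ℝ (Fin n)) : ℝ :=
  ∑ i, fderiv ℝ φ x (EuclideanSpace.single i (1:ℝ)) i

def varSet {n : ℕ} (w : EuclideanSpace ℝ (Fin n) → ℝ) : Set ℝ :=
  {p | ∃ φ : EuclideanSpace ℝ (Fin n) → EuclideanSpace ℝ (Fin n),
      ContDiff ℝ 1 φ ∧ HasCompactSupport φ ∧ (∀ x, ‖φ x‖ ≤ 1) ∧
      p = ∫ x, w x * diverg φ x}

def totalVar {n : ℕ} (w : EuclideanSpace ℝ (Fin n) → ℝ) : ℝ := sSup (varSet w)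

def IsBV {n : ℕ} (w : EuclideanSpace ℝ (Fin n) → ℝ) : Prop :=
  Integrable w ∧ BddAbove (varSet w)

def perim {n : ℕ} (E : Set (EuclideanSpace ℝ (Fin n))) : ℝ :=
  totalVar (E.indicator fun _ => (1 : ℝ))

def HasFinPerim {n : ℕ} (E : Set (EuclideanSpace ℝ (Fin n))) : Prop :=
  IsBV (E.indicator fun _ => (1 : ℝ))

def omegaN (n : ℕ) : ℝ := (volume (ball (0 : EuclideanSpace ℝ (Fin n)) 1)).toReal

def decRearr {α : Type*} [MeasurableSpace α] (μ : Measure α) (g : α → ℝ) (s : ℝ) : ℝ :=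
  sInf {t : ℝ | 0 < t ∧ μ {x | t < |g x|} ≤ ENNReal.ofReal s}

/-!
Write `I(m) = n ω_n^{1/n} m^{1-1/n}` for the perimeter of a ball of volume `m`. If `s ≤ t`, then for
every level `c` between `u*(t)` and `u*(s)` the set `{u > c}` has volume at least `s`, so the
isoperimetric inequality and the coarea formula on the strip `u*(t) < u < u*(s)` give
`I(s) (u*(s) - u*(t)) ≤ G(t) - G(s) = σ((s, t])`. Summing this over the geometric sequence
`s, s r, s r², …` and using `I(s r) ≤ r I(s)` bounds `u*(s)` by `r ∫_{(s,∞)} I(τ)⁻¹ dσ(τ)`; now let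
`r ↓ 1`.

The estimate on the strip needs neither the coarea formula nor sets of finite perimeter. For a `C¹`
function `w`, the Brunn–Minkowski inequality bounds `|{w > t} + B_e|` from below for each `t < c`;
integrating over `t`, comparing with the supremum of `w` over balls of radius `e` and letting
`e → 0` gives `I(m) c ≤ ∫_{w < c} |∇w|` whenever `|{w > c}| ≥ m`. Mollification carries this over
to `BV`.
-/

/-! ### The Brunn–Minkowski inequality -/

section LogConcavity

open scoped Pointwise

theorem volume_add_volume_le {A B : Set ℝ} (hA : MeasurableSet A) (hB : MeasurableSet B)
    (hAne : A.Nonempty) (hBne : B.Nonempty) : volume A + volume B ≤ volume (A + B) := by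
  have translate_left : ∀ x ∈ A, volume B ≤ volume (A + B) := fun x hx => by
    rw [← measure_vadd volume x B]
    exact measure_mono (vadd_set_subset_add hx)
  have translate_right : ∀ y ∈ B, volume A ≤ volume (A + B) := fun y hy => by
    rw [← measure_vadd volume y A, add_comm A B]
    exact measure_mono (vadd_set_subset_add hy)
  rcases eq_or_ne (volume A) 0 with hA0 | hA0
  · simpa [hA0] using translate_left _ hAne.some_mem
  rcases eq_or_ne (volume B) 0 with hB0 | hB0
  · simpa [hB0] using translate_right _ hBne.some_mem
  refine le_of_forall_lt fun c hc => ?_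
  obtain ⟨y, hy, z, hz, hcyz⟩ := ENNReal.exists_lt_add_of_lt_add hc hA0 hB0
  obtain ⟨K, hKA, hK, hyK⟩ := hA.exists_lt_isCompact hy
  obtain ⟨L, hLB, hL, hzL⟩ := hB.exists_lt_isCompact hz
  obtain ⟨k, hkK, hk⟩ := hK.exists_isGreatest (nonempty_of_measure_ne_zero hyK.ne_bot)
  obtain ⟨l, hlL, hl⟩ := hL.exists_isLeast (nonempty_of_measure_ne_zero hzL.ne_bot)
  -- The translates `l + K` and `k + L` lie in `A + B` and meet only at `k + l`.
  have hdisj : AEDisjoint volume (l +ᵥ K) (k +ᵥ L) := by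
    refine measure_mono_null (t := {k + l}) ?_ Real.volume_singleton
    rintro _ ⟨⟨x, hx, rfl⟩, ⟨x', hx', hxx'⟩⟩
    have h₁ := hk hx
    have h₂ := hl hx'
    simp only [vadd_eq_add, mem_singleton_iff] at hxx' ⊢
    linarith
  have hsub : (l +ᵥ K) ∪ (k +ᵥ L) ⊆ A + B :=
    union_subset ((vadd_set_mono hKA).trans (add_comm A B ▸ vadd_set_subset_add (hLB hlL)))
      ((vadd_set_mono hLB).trans (vadd_set_subset_add (hKA hkK)))
  calc c < y + z := hcyz
    _ ≤ volume (l +ᵥ K) + volume (k +ᵥ L) := by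
        rw [measure_vadd, measure_vadd]; exact add_le_add hyK.le hzL.le
    _ = volume ((l +ᵥ K) ∪ (k +ᵥ L)) :=
        (measure_union₀ (hL.vadd k).measurableSet.nullMeasurableSet hdisj).symm
    _ ≤ volume (A + B) := measure_mono hsub

theorem lintegral_min_ofReal_eq_lintegral_meas_lt {α : Type*} [MeasurableSpace α] (μ : Measure α)
    {f : α → ℝ≥0∞} (hf : Measurable f) (c : ℝ) :
    ∫⁻ x, min (f x) (ENNReal.ofReal c) ∂μ =
      ∫⁻ t in Ioo 0 c, μ {x | ENNReal.ofReal t < f x} := by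
  set g : α → ℝ≥0∞ := fun x => min (f x) (ENNReal.ofReal c)
  have hg : ∀ x, g x ≠ ∞ := fun x => ((min_le_right _ _).trans_lt ENNReal.ofReal_lt_top).ne
  calc ∫⁻ x, g x ∂μ = ∫⁻ x, ENNReal.ofReal (g x).toReal ∂μ := by
        simp only [ENNReal.ofReal_toReal (hg _)]
    _ = ∫⁻ t in Ioi 0, μ {x | t < (g x).toReal} :=
        lintegral_eq_lintegral_meas_lt μ (Eventually.of_forall fun x => ENNReal.toReal_nonneg)
          (hf.min measurable_const).ennreal_toReal.aemeasurable
    _ = ∫⁻ t in Ioi 0, (Iio c).indicator (fun t => μ {x | ENNReal.ofReal t < f x}) t := by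
        refine setLIntegral_congr_fun measurableSet_Ioi fun t ht => ?_
        have hlt : ∀ x, t < (g x).toReal ↔ ENNReal.ofReal t < f x ∧ t < c := fun x => by
          rw [← ENNReal.ofReal_lt_iff_lt_toReal (le_of_lt ht) (hg x), lt_min_iff,
            ENNReal.ofReal_lt_ofReal_iff_of_nonneg (le_of_lt ht)]
        by_cases htc : t < c <;> simp [hlt, htc]
    _ = ∫⁻ t in Ioo 0 c, μ {x | ENNReal.ofReal t < f x} := by
        rw [lintegral_indicator measurableSet_Iio, Measure.restrict_restrict measurableSet_Iio,
          Iio_inter_Ioi]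

variable {a b : ℝ}

theorem ofReal_mul_volume_lt_add_le_volume_lt {F G H : ℝ → ℝ≥0∞} (hF : Measurable F)
    (hG : Measurable G) (ha : 0 < a) (hb : 0 < b) (hab : a + b = 1)
    (h : ∀ x y, F x ^ a * G y ^ b ≤ H (a • x + b • y)) {t : ℝ≥0∞}
    (hFt : {x | t < F x}.Nonempty) (hGt : {x | t < G x}.Nonempty) :
    ENNReal.ofReal a * volume {x | t < F x} + ENNReal.ofReal b * volume {x | t < G x} ≤
      volume {x | t < H x} := by
  have hscale : ∀ {r : ℝ}, 0 < r → ∀ s : Set ℝ, volume (r • s) = ENNReal.ofReal r * volume s :=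
    fun hr s => by rw [Measure.addHaar_smul_of_nonneg _ hr.le, Module.finrank_self, pow_one]
  rw [← hscale ha, ← hscale hb]
  refine (volume_add_volume_le ((measurableSet_lt measurable_const hF).const_smul₀ a)
    ((measurableSet_lt measurable_const hG).const_smul₀ b) hFt.smul_set hGt.smul_set).trans
    (measure_mono ?_)
  rintro _ ⟨_, ⟨x, hx, rfl⟩, _, ⟨y, hy, rfl⟩, rfl⟩
  calc t = t ^ a * t ^ b := by
        rw [← ENNReal.rpow_add_of_nonneg _ _ ha.le hb.le, hab, ENNReal.rpow_one]
    _ < F x ^ a * G y ^ b :=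
        ENNReal.mul_lt_mul (ENNReal.rpow_lt_rpow hx ha) (ENNReal.rpow_lt_rpow hy hb)
    _ ≤ H (a • x + b • y) := h x y

theorem ofReal_mul_lintegral_add_le_of_iSup_eq_one {F G H : ℝ → ℝ≥0∞} (hF : Measurable F)
    (hG : Measurable G) (hH : Measurable H) (hF1 : (⨆ x, F x) = 1) (hG1 : (⨆ x, G x) = 1)
    (ha : 0 < a) (hb : 0 < b) (hab : a + b = 1)
    (h : ∀ x y, F x ^ a * G y ^ b ≤ H (a • x + b • y)) :
    ENNReal.ofReal a * (∫⁻ x, F x) + ENNReal.ofReal b * (∫⁻ x, G x) ≤ ∫⁻ x, H x := by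
  have layers : ∀ {K : ℝ → ℝ≥0∞}, Measurable K → (⨆ x, K x) = 1 →
      ∫⁻ x, K x = ∫⁻ t in Ioo (0 : ℝ) 1, volume {x | ENNReal.ofReal t < K x} := by
    intro K hK hK1
    rw [← lintegral_min_ofReal_eq_lintegral_meas_lt volume hK 1]
    simp only [ENNReal.ofReal_one, min_eq_left ((le_iSup K _).trans_eq hK1)]
  have hnonempty : ∀ {K : ℝ → ℝ≥0∞}, (⨆ x, K x) = 1 → ∀ t ∈ Ioo (0 : ℝ) 1,
      {x | ENNReal.ofReal t < K x}.Nonempty := fun {K} hK1 t ht =>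
    lt_iSup_iff.1 (show _ < ⨆ x, K x by rw [hK1]; exact ENNReal.ofReal_lt_one.2 ht.2)
  calc ENNReal.ofReal a * (∫⁻ x, F x) + ENNReal.ofReal b * (∫⁻ x, G x)
      ≤ ∫⁻ t in Ioo (0 : ℝ) 1, (ENNReal.ofReal a * volume {x | ENNReal.ofReal t < F x} +
          ENNReal.ofReal b * volume {x | ENNReal.ofReal t < G x}) := by
        rw [layers hF hF1, layers hG hG1, ← lintegral_const_mul' _ _ ENNReal.ofReal_ne_top,
          ← lintegral_const_mul' _ _ ENNReal.ofReal_ne_top]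
        exact le_lintegral_add _ _
    _ ≤ ∫⁻ t in Ioo (0 : ℝ) 1, volume {x | ENNReal.ofReal t < H x} :=
        setLIntegral_mono' measurableSet_Ioo fun t ht =>
          ofReal_mul_volume_lt_add_le_volume_lt hF hG ha hb hab h (hnonempty hF1 t ht)
            (hnonempty hG1 t ht)
    _ = ∫⁻ x, min (H x) (ENNReal.ofReal 1) :=
        (lintegral_min_ofReal_eq_lintegral_meas_lt volume hH 1).symm
    _ ≤ ∫⁻ x, H x := lintegral_mono fun x => min_le_left _ _

theorem rpow_mul_rpow_le_ofReal_mul_add (ha : 0 < a) (hb : 0 < b) (hab : a + b = 1)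
    (x y : ℝ≥0∞) : x ^ a * y ^ b ≤ ENNReal.ofReal a * x + ENNReal.ofReal b * y := by
  rcases eq_or_ne x ∞ with rfl | hx
  · rw [ENNReal.mul_top (ENNReal.ofReal_pos.2 ha).ne', top_add]; exact le_top
  rcases eq_or_ne y ∞ with rfl | hy
  · rw [ENNReal.mul_top (ENNReal.ofReal_pos.2 hb).ne', add_top]; exact le_top
  lift x to ℝ≥0 using hx
  lift y to ℝ≥0 using hy
  have := NNReal.geom_mean_le_arith_mean2_weighted a.toNNReal b.toNNReal x y
    (by rw [← Real.toNNReal_add ha.le hb.le, hab, Real.toNNReal_one])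
  rw [Real.coe_toNNReal _ ha.le, Real.coe_toNNReal _ hb.le] at this
  rw [← ENNReal.coe_rpow_of_nonneg _ ha.le, ← ENNReal.coe_rpow_of_nonneg _ hb.le]
  simp only [ENNReal.ofReal]
  exact_mod_cast this

/-- The one-dimensional **Prékopa–Leindler inequality** for bounded functions. -/
theorem lintegral_rpow_mul_lintegral_rpow_le {F G H : ℝ → ℝ≥0∞} (hF : Measurable F)
    (hG : Measurable G) (hH : Measurable H) (hFtop : (⨆ x, F x) ≠ ∞) (hGtop : (⨆ x, G x) ≠ ∞)
    (ha : 0 < a) (hb : 0 < b) (hab : a + b = 1)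
    (h : ∀ x y, F x ^ a * G y ^ b ≤ H (a • x + b • y)) :
    (∫⁻ x, F x) ^ a * (∫⁻ x, G x) ^ b ≤ ∫⁻ x, H x := by
  rcases eq_or_ne (⨆ x, F x) 0 with hF0 | hF0
  · simp [ENNReal.iSup_eq_zero.1 hF0, ENNReal.zero_rpow_of_pos ha]
  rcases eq_or_ne (⨆ x, G x) 0 with hG0 | hG0
  · simp [ENNReal.iSup_eq_zero.1 hG0, ENNReal.zero_rpow_of_pos hb]
  set p := ⨆ x, F x
  set q := ⨆ x, G x
  have hpa : p ^ a ≠ ∞ := ENNReal.rpow_ne_top_of_nonneg ha.le hFtop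
  have hqb : q ^ b ≠ ∞ := ENNReal.rpow_ne_top_of_nonneg hb.le hGtop
  have hpq0 : p ^ a * q ^ b ≠ 0 :=
    mul_ne_zero (ENNReal.rpow_pos (pos_iff_ne_zero.2 hF0) hFtop).ne'
      (ENNReal.rpow_pos (pos_iff_ne_zero.2 hG0) hGtop).ne'
  have rescale : ∀ x y : ℝ≥0∞,
      (p⁻¹ * x) ^ a * (q⁻¹ * y) ^ b = (p ^ a * q ^ b)⁻¹ * (x ^ a * y ^ b) := fun x y => by
    rw [ENNReal.mul_rpow_of_nonneg _ _ ha.le, ENNReal.mul_rpow_of_nonneg _ _ hb.le,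
      ENNReal.inv_rpow, ENNReal.inv_rpow, mul_mul_mul_comm,
      ← ENNReal.mul_inv (Or.inr hqb) (Or.inl hpa)]
  have normalized := ofReal_mul_lintegral_add_le_of_iSup_eq_one
    (hF.const_mul p⁻¹) (hG.const_mul q⁻¹) (hH.const_mul (p ^ a * q ^ b)⁻¹)
    (by rw [← ENNReal.mul_iSup, ENNReal.inv_mul_cancel hF0 hFtop])
    (by rw [← ENNReal.mul_iSup, ENNReal.inv_mul_cancel hG0 hGtop]) ha hb hab
    (fun x y => by rw [rescale]; gcongr; exact h x y)
  rw [lintegral_const_mul _ hF, lintegral_const_mul _ hG, lintegral_const_mul _ hH] at normalized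
  have := (rpow_mul_rpow_le_ofReal_mul_add ha hb hab _ _).trans normalized
  rw [rescale] at this
  exact (ENNReal.mul_le_mul_iff_right (ENNReal.inv_ne_zero.2 (ENNReal.mul_ne_top hpa hqb))
    (ENNReal.inv_ne_top.2 hpq0)).1 this

/-- A measure is log-concave if it satisfies the multiplicative Brunn–Minkowski inequality
`μ A ^ a * μ B ^ b ≤ μ (a A + b B)` for convex weights `a, b`. The sum `a A + b B` need not be
measurable, hence the measurable set `C` containing it. -/
def IsLogConcave {E : Type*} [AddCommGroup E] [Module ℝ E] [Bornology E] [MeasurableSpace E]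
    (μ : Measure E) : Prop :=
  ∀ ⦃a b : ℝ⦄, 0 < a → 0 < b → a + b = 1 → ∀ ⦃A B C : Set E⦄, MeasurableSet A →
    MeasurableSet B → MeasurableSet C → Bornology.IsBounded A → Bornology.IsBounded B →
    (∀ x ∈ A, ∀ y ∈ B, a • x + b • y ∈ C) → μ A ^ a * μ B ^ b ≤ μ C

namespace IsLogConcave

variable {E F : Type*} [NormedAddCommGroup E] [NormedSpace ℝ E] [MeasurableSpace E]
  [NormedAddCommGroup F] [NormedSpace ℝ F] [MeasurableSpace F] {μ : Measure E}

theorem of_subsingleton [Subsingleton E] [IsProbabilityMeasure μ] : IsLogConcave μ := by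
  intro a b ha hb _ A B C _ _ _ _ _ hC
  rcases A.eq_empty_or_nonempty with rfl | ⟨x, hx⟩
  · simp [ENNReal.zero_rpow_of_pos ha]
  rcases B.eq_empty_or_nonempty with rfl | ⟨y, hy⟩
  · simp [ENNReal.zero_rpow_of_pos hb]
  rw [Subsingleton.eq_univ_of_nonempty ⟨x, hx⟩, Subsingleton.eq_univ_of_nonempty ⟨y, hy⟩,
    Subsingleton.eq_univ_of_nonempty ⟨_, hC x hx y hy⟩]
  simp

theorem of_measurePreserving (hμ : IsLogConcave μ) {ν : Measure F} (e : E ≃L[ℝ] F)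
    (he : MeasurePreserving e μ ν) : IsLogConcave ν := by
  intro a b ha hb hab A B C hA hB hC hAb hBb hsub
  have hbdd : ∀ {S : Set F}, Bornology.IsBounded S → Bornology.IsBounded (e ⁻¹' S) :=
    fun hS => e.antilipschitz.isBounded_preimage hS
  rw [← he.measure_preimage hA.nullMeasurableSet, ← he.measure_preimage hB.nullMeasurableSet,
    ← he.measure_preimage hC.nullMeasurableSet]
  exact hμ ha hb hab (he.measurable hA) (he.measurable hB) (he.measurable hC) (hbdd hAb)
    (hbdd hBb) fun x hx y hy => by
      simpa only [mem_preimage, map_add, map_smul] using hsub _ hx _ hy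

theorem volume_prod [ProperSpace E] [SFinite μ] [IsFiniteMeasureOnCompacts μ]
    (hμ : IsLogConcave μ) : IsLogConcave ((volume : Measure ℝ).prod μ) := by
  intro a b ha hb hab A B C hA hB hC hAb hBb hsub
  have hfinite : ∀ {S : Set (ℝ × E)}, Bornology.IsBounded S →
      (⨆ x, μ (Prod.mk x ⁻¹' S)) ≠ ∞ := fun {S} hS =>
    ((iSup_le fun x => measure_mono (t := Prod.snd '' S) fun y hy => ⟨(x, y), hy, rfl⟩).trans_lt
      hS.image_snd.measure_lt_top).ne
  have hsection : ∀ {S : Set (ℝ × E)}, Bornology.IsBounded S → ∀ x,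
      Bornology.IsBounded (Prod.mk x ⁻¹' S) := fun hS x =>
    hS.image_snd.subset fun y hy => ⟨(x, y), hy, rfl⟩
  rw [Measure.prod_apply hA, Measure.prod_apply hB, Measure.prod_apply hC]
  refine lintegral_rpow_mul_lintegral_rpow_le (measurable_measure_prodMk_left hA)
    (measurable_measure_prodMk_left hB) (measurable_measure_prodMk_left hC) (hfinite hAb)
    (hfinite hBb) ha hb hab fun x y => ?_
  exact hμ ha hb hab (measurable_prodMk_left hA) (measurable_prodMk_left hB)
    (measurable_prodMk_left hC) (hsection hAb x) (hsection hBb y) fun z hz w hw =>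
      hsub (x, z) hz (y, w) hw

theorem volume_pi : ∀ n : ℕ, IsLogConcave (volume : Measure (Fin n → ℝ))
  | 0 =>
      have : IsProbabilityMeasure (volume : Measure (Fin 0 → ℝ)) :=
        ⟨by rw [MeasureTheory.volume_pi, Measure.pi_of_empty, measure_univ]⟩
      of_subsingleton
  | n + 1 => (volume_pi n).volume_prod.of_measurePreserving
      (Fin.consEquivL ℝ fun _ : Fin (n + 1) => ℝ) (by
        have hcons : ⇑(Fin.consEquivL ℝ fun _ : Fin (n + 1) => ℝ) =
            (MeasurableEquiv.piFinSuccAbove (fun _ => ℝ) 0).symm := by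
          funext x
          exact (Fin.insertNth_zero' x.1 x.2).symm
        rw [hcons]
        exact (volume_preserving_piFinSuccAbove (fun _ : Fin (n + 1) => ℝ) 0).symm)

theorem volume_euclideanSpace (n : ℕ) :
    IsLogConcave (volume : Measure (EuclideanSpace ℝ (Fin n))) :=
  (volume_pi n).of_measurePreserving (PiLp.continuousLinearEquiv 2 ℝ fun _ : Fin n => ℝ).symm
    (PiLp.volume_preserving_toLp (Fin n))

end IsLogConcave

end LogConcavity

/-! ### The isoperimetric inequality for smooth functions -/

section IsoperimetricInequality

open scoped Pointwise

theorem omegaN_pos (n : ℕ) : 0 < omegaN n :=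
  ENNReal.toReal_pos (measure_ball_pos volume _ one_pos).ne' measure_ball_lt_top.ne

/-- The perimeter `n ω_n^{1/n} m^{1-1/n}` of a ball of volume `m` in `ℝⁿ`, which the isoperimetric
inequality makes the least perimeter of a set of volume `m`. -/
def isoperimetricProfile (n : ℕ) (m : ℝ) : ℝ :=
  n * omegaN n ^ ((1 : ℝ) / n) * m ^ (1 - (1 : ℝ) / n)

theorem one_sub_one_div_natCast_nonneg (n : ℕ) : 0 ≤ 1 - (1 : ℝ) / n := by
  simpa only [one_div, sub_nonneg] using Nat.cast_inv_le_one n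

theorem isoperimetricProfile_pos {n : ℕ} (hn : 0 < n) {m : ℝ} (hm : 0 < m) :
    0 < isoperimetricProfile n m := by
  have := omegaN_pos n
  unfold isoperimetricProfile
  positivity

theorem isoperimetricProfile_monotoneOn (n : ℕ) :
    MonotoneOn (isoperimetricProfile n) (Ici 0) := fun _ hm _ _ hmm' =>
  mul_le_mul_of_nonneg_left (Real.rpow_le_rpow hm hmm' (one_sub_one_div_natCast_nonneg n))
    (mul_nonneg n.cast_nonneg (Real.rpow_nonneg (omegaN_pos n).le _))

theorem isoperimetricProfile_mul_le (n : ℕ) {s r : ℝ} (hs : 0 ≤ s) (hr : 1 ≤ r) :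
    isoperimetricProfile n (s * r) ≤ r * isoperimetricProfile n s := by
  have hω := Real.rpow_nonneg (omegaN_pos n).le ((1 : ℝ) / n)
  calc isoperimetricProfile n (s * r)
      = r ^ (1 - (1 : ℝ) / n) * isoperimetricProfile n s := by
        rw [isoperimetricProfile, isoperimetricProfile, Real.mul_rpow hs (by linarith)]
        ring
    _ ≤ r ^ (1 : ℝ) * isoperimetricProfile n s := by
        have : 0 ≤ isoperimetricProfile n s := by unfold isoperimetricProfile; positivity
        gcongr ?_ * _
        exact Real.rpow_le_rpow_of_exponent_le hr
          (by linarith [show 0 ≤ (1 : ℝ) / n by positivity])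
    _ = r * isoperimetricProfile n s := by rw [Real.rpow_one]

variable {n : ℕ} {A : Set (EuclideanSpace ℝ (Fin n))} {e : ℝ}

/-- The **Brunn–Minkowski inequality** for the sum of a set and a ball. -/
theorem ofReal_add_pow_le_volume_thickening (hn : 0 < n) (hA : MeasurableSet A)
    (hAb : Bornology.IsBounded A) (hA0 : volume A ≠ 0) (he : 0 < e) :
    ENNReal.ofReal ((volume.real A ^ ((1 : ℝ) / n) + e * omegaN n ^ ((1 : ℝ) / n)) ^ n) ≤
      volume (thickening e A) := by
  have hω := omegaN_pos n
  have hV : 0 < volume.real A := ENNReal.toReal_pos hA0 hAb.measure_lt_top.ne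
  have hroot : ∀ {x : ℝ}, 0 ≤ x → (x ^ ((1 : ℝ) / n)) ^ n = x := fun hx => by
    rw [one_div, Real.rpow_inv_natCast_pow hx hn.ne']
  set a := volume.real A ^ ((1 : ℝ) / n)
  set b := e * omegaN n ^ ((1 : ℝ) / n)
  have ha : 0 < a := by positivity
  have hb : 0 < b := by positivity
  have volume_A : volume A = ENNReal.ofReal (a ^ n) := by
    rw [hroot hV.le, ofReal_measureReal hAb.measure_lt_top.ne]
  have volume_ball : volume (ball (0 : EuclideanSpace ℝ (Fin n)) e) = ENNReal.ofReal (b ^ n) := by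
    rw [Measure.addHaar_ball_of_pos _ _ he, finrank_euclideanSpace_fin, mul_pow, hroot hω.le,
      ENNReal.ofReal_mul (by positivity), omegaN, ENNReal.ofReal_toReal measure_ball_lt_top.ne]
  -- Dilate `A` and the ball to the same volume `(a + b) ^ n`.
  have volume_dilate : ∀ {S : Set (EuclideanSpace ℝ (Fin n))} {r : ℝ}, 0 < r →
      volume S = ENNReal.ofReal (r ^ n) →
      volume ((r / (a + b))⁻¹ • S) = ENNReal.ofReal ((a + b) ^ n) := fun {S r} hr hS => by
    rw [Measure.addHaar_smul_of_nonneg _ (by positivity), hS, finrank_euclideanSpace_fin,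
      ← ENNReal.ofReal_mul (by positivity), ← mul_pow]
    congr 2
    field_simp
  have hweights : a / (a + b) + b / (a + b) = 1 := by field_simp
  have hne : ∀ {r : ℝ}, 0 < r → r / (a + b) ≠ 0 := fun hr => by positivity
  have key := IsLogConcave.volume_euclideanSpace n (by positivity) (by positivity) hweights
    (hA.const_smul₀ (a / (a + b))⁻¹)
    ((measurableSet_ball (x := (0 : EuclideanSpace ℝ (Fin n))) (ε := e)).const_smul₀
      (b / (a + b))⁻¹)
    (isOpen_thickening (δ := e) (E := A)).measurableSet (hAb.smul₀ _) (isBounded_ball.smul₀ _) (by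
      rintro _ ⟨x, hx, rfl⟩ _ ⟨y, hy, rfl⟩
      simp only [smul_inv_smul₀ (hne ha), smul_inv_smul₀ (hne hb)]
      exact mem_thickening_iff.2 ⟨x, hx, by simpa [dist_eq_norm] using hy⟩)
  rwa [volume_dilate ha volume_A, volume_dilate hb volume_ball,
    ← ENNReal.rpow_add _ _ (ENNReal.ofReal_pos.2 (by positivity)).ne' ENNReal.ofReal_ne_top,
    hweights, ENNReal.rpow_one] at key

theorem volume_add_mul_isoperimetricProfile_le_volume_thickening (hn : 0 < n)
    (hA : MeasurableSet A) (hAb : Bornology.IsBounded A) {m : ℝ} (hm : 0 < m)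
    (hmA : ENNReal.ofReal m ≤ volume A) (he : 0 < e) :
    volume A + ENNReal.ofReal (e * isoperimetricProfile n m) ≤ volume (thickening e A) := by
  have hA0 : volume A ≠ 0 := ((ENNReal.ofReal_pos.2 hm).trans_le hmA).ne'
  refine le_trans ?_ (ofReal_add_pow_le_volume_thickening hn hA hAb hA0 he)
  have hmV : m ≤ volume.real A := (ENNReal.ofReal_le_iff_le_toReal hAb.measure_lt_top.ne).1 hmA
  have hV : 0 < volume.real A := hm.trans_le hmV
  rw [← ofReal_measureReal hAb.measure_lt_top.ne, ← ENNReal.ofReal_add hV.le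
    (mul_nonneg he.le (isoperimetricProfile_pos hn hm).le)]
  refine ENNReal.ofReal_le_ofReal ?_
  set V := volume.real A
  set a := V ^ ((1 : ℝ) / n) with ha
  set b := e * omegaN n ^ ((1 : ℝ) / n) with hb
  have ha0 : 0 < a := Real.rpow_pos_of_pos hV _
  have hb0 : 0 < b := mul_pos he (Real.rpow_pos_of_pos (omegaN_pos n) _)
  have hpow : a ^ n = V := by rw [ha, one_div, Real.rpow_inv_natCast_pow hV.le hn.ne']
  have hpow_pred : a ^ (n - 1) = V ^ (1 - (1 : ℝ) / n) := by
    rw [ha, ← Real.rpow_natCast, ← Real.rpow_mul hV.le, Nat.cast_sub hn]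
    congr 1
    field_simp
    simp
  calc V + e * isoperimetricProfile n m ≤ V + e * isoperimetricProfile n V := by
        gcongr
        exact isoperimetricProfile_monotoneOn n hm.le hV.le hmV
    _ = a ^ n + n * a ^ (n - 1) * b := by
        rw [hpow, hpow_pred, hb, isoperimetricProfile]
        ring
    _ ≤ (a + b) ^ n := pow_add_mul_le_add_pow ha0.le (by linarith) n

theorem lintegral_min_add_le_lintegral {F Q : EuclideanSpace ℝ (Fin n) → ℝ≥0∞} {c m : ℝ}
    (hn : 0 < n) (hF : Measurable F) (hQ : Measurable Q)
    (hFb : ∀ t, 0 < t → Bornology.IsBounded {x | ENNReal.ofReal t < F x}) (hm : 0 < m)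
    (hmF : ENNReal.ofReal m ≤ volume {x | ENNReal.ofReal c < F x}) (he : 0 < e)
    (h : ∀ x y, dist x y < e → min (F y) (ENNReal.ofReal c) ≤ Q x) :
    (∫⁻ x, min (F x) (ENNReal.ofReal c)) +
        ENNReal.ofReal (e * isoperimetricProfile n m) * ENNReal.ofReal c ≤ ∫⁻ x, Q x := by
  have hthick : ∀ t ∈ Ioo 0 c, thickening e {x | ENNReal.ofReal t < F x} ⊆
      {x | ENNReal.ofReal t < Q x} := fun t ht x hx => by
    obtain ⟨y, hy, hxy⟩ := mem_thickening_iff.1 hx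
    exact (lt_min hy (ENNReal.ofReal_lt_ofReal_iff_of_nonneg ht.1.le |>.2 ht.2)).trans_le
      (h x y hxy)
  calc (∫⁻ x, min (F x) (ENNReal.ofReal c)) +
          ENNReal.ofReal (e * isoperimetricProfile n m) * ENNReal.ofReal c
      = ∫⁻ t in Ioo 0 c, (volume {x | ENNReal.ofReal t < F x} +
          ENNReal.ofReal (e * isoperimetricProfile n m)) := by
        rw [lintegral_min_ofReal_eq_lintegral_meas_lt volume hF,
          lintegral_add_right _ measurable_const, setLIntegral_const, Real.volume_Ioo, sub_zero]
    _ ≤ ∫⁻ t in Ioo 0 c, volume {x | ENNReal.ofReal t < Q x} :=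
        setLIntegral_mono' measurableSet_Ioo fun t ht =>
          (volume_add_mul_isoperimetricProfile_le_volume_thickening hn
            (measurableSet_lt measurable_const hF) (hFb t ht.1) hm
            (hmF.trans <| measure_mono fun x hx =>
              (ENNReal.ofReal_le_ofReal ht.2.le).trans_lt hx) he).trans
          (measure_mono (hthick t ht))
    _ = ∫⁻ x, min (Q x) (ENNReal.ofReal c) :=
        (lintegral_min_ofReal_eq_lintegral_meas_lt volume hQ c).symm
    _ ≤ ∫⁻ x, Q x := lintegral_mono fun x => min_le_left _ _

section MeanValue

variable {E F : Type*} [NormedAddCommGroup E] [NormedSpace ℝ E] [NormedAddCommGroup F]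
  [NormedSpace ℝ F] {η : ℝ}

theorem exists_forall_dist_lt_norm_sub_le {f : E → F} (hf : Differentiable ℝ f)
    (hf' : UniformContinuous (fderiv ℝ f)) (hη : 0 < η) :
    ∃ δ > 0, ∀ x y, dist x y < δ → ‖f y - f x‖ ≤ (‖fderiv ℝ f x‖ + η) * dist x y := by
  obtain ⟨δ, hδ, hclose⟩ := Metric.uniformContinuous_iff.1 hf' η hη
  refine ⟨δ, hδ, fun x y hxy => ?_⟩
  rw [dist_comm, dist_eq_norm]
  refine (convex_ball x δ).norm_image_sub_le_of_norm_fderiv_le (𝕜 := ℝ) (fun z _ => hf z)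
    (fun z hz => ?_) (mem_ball_self hδ) (mem_ball'.2 hxy)
  have := hclose (mem_ball.1 hz)
  rw [dist_eq_norm] at this
  linarith [norm_sub_norm_le (fderiv ℝ f z) (fderiv ℝ f x)]

theorem exists_forall_dist_lt_min_ofReal_le {w : E → ℝ} (hw : ContDiff ℝ 1 w)
    (hwc : HasCompactSupport w) (c : ℝ) (hη : 0 < η) :
    ∃ e > 0, ∀ x y, dist x y < e → min (ENNReal.ofReal (w y)) (ENNReal.ofReal c) ≤
      min (ENNReal.ofReal (w x)) (ENNReal.ofReal c) + ENNReal.ofReal e *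
        ({x | w x < c}.indicator (fun x => ‖fderiv ℝ w x‖ₑ) x +
          (cthickening 1 (tsupport w)).indicator (fun _ => ENNReal.ofReal η) x) := by
  obtain ⟨δ, hδ, hmean⟩ := exists_forall_dist_lt_norm_sub_le (hw.differentiable one_ne_zero)
    ((hwc.fderiv ℝ).uniformContinuous_of_continuous (hw.continuous_fderiv one_ne_zero)) hη
  refine ⟨min δ 1, lt_min hδ one_pos, fun x y hxy => ?_⟩
  rcases le_or_gt c (w x) with hcx | hcx
  · rw [min_eq_right (ENNReal.ofReal_le_ofReal hcx)]
    exact (min_le_right _ _).trans le_self_add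
  by_cases hy : y ∈ tsupport w
  · have hx : x ∈ cthickening 1 (tsupport w) :=
      mem_cthickening_of_dist_le x y 1 _ hy (hxy.le.trans (min_le_right _ _))
    have hwy : w y ≤ w x + min δ 1 * (‖fderiv ℝ w x‖ + η) := by
      nlinarith [le_abs_self (w y - w x), hmean x y (hxy.trans_le (min_le_left _ _)),
        Real.norm_eq_abs (w y - w x), norm_nonneg (fderiv ℝ w x)]
    rw [min_eq_left (ENNReal.ofReal_le_ofReal hcx.le), indicator_of_mem hx,
      indicator_of_mem (show x ∈ {x | w x < c} from hcx), ← ofReal_norm,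
      ← ENNReal.ofReal_add (norm_nonneg _) hη.le, ← ENNReal.ofReal_mul (by positivity)]
    exact (min_le_left _ _).trans ((ENNReal.ofReal_le_ofReal hwy).trans ENNReal.ofReal_add_le)
  · simp [image_eq_zero_of_notMem_tsupport hy]

end MeanValue

variable {w : EuclideanSpace ℝ (Fin n) → ℝ} {c m : ℝ}

theorem isoperimetricProfile_mul_le_setLIntegral_add (hn : 0 < n) (hw : ContDiff ℝ 1 w)
    (hwc : HasCompactSupport w) (hm : 0 < m) (hmw : ENNReal.ofReal m ≤ volume {x | c < w x})
    (hc : 0 < c) {η : ℝ} (hη : 0 < η) :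
    ENNReal.ofReal (isoperimetricProfile n m * c) ≤ (∫⁻ x in {x | w x < c}, ‖fderiv ℝ w x‖ₑ) +
      ENNReal.ofReal η * volume (cthickening 1 (tsupport w)) := by
  have hDw : Measurable fun x => ‖fderiv ℝ w x‖ₑ :=
    (hw.continuous_fderiv one_ne_zero).measurable.enorm
  have hwm : Measurable w := hw.continuous.measurable
  have hI := isoperimetricProfile_pos hn hm
  have hK : MeasurableSet (cthickening 1 (tsupport w)) := isClosed_cthickening.measurableSet
  have hlow : MeasurableSet {x | w x < c} := measurableSet_lt hwm measurable_const
  have hR : Measurable fun x => {x | w x < c}.indicator (fun x => ‖fderiv ℝ w x‖ₑ) x +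
      (cthickening 1 (tsupport w)).indicator (fun _ => ENNReal.ofReal η) x :=
    (hDw.indicator hlow).add (measurable_const.indicator hK)
  obtain ⟨e, he, hsup⟩ := exists_forall_dist_lt_min_ofReal_le hw hwc c hη
  have key := lintegral_min_add_le_lintegral hn hwm.ennreal_ofReal
    ((hwm.ennreal_ofReal.min measurable_const).add (hR.const_mul _))
    (fun t _ => hwc.isCompact.isBounded.subset fun x hx => subset_tsupport w fun h0 => by
      simp [h0] at hx) hm
    (by simpa only [ENNReal.ofReal_lt_ofReal_iff_of_nonneg hc.le] using hmw) he hsup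
  simp only [Pi.add_apply] at key
  rw [lintegral_add_left (hwm.ennreal_ofReal.min measurable_const),
    lintegral_const_mul _ hR, lintegral_add_left (hDw.indicator hlow), lintegral_indicator hlow,
    lintegral_indicator_const hK] at key
  have hfinite : ∫⁻ x, min (ENNReal.ofReal (w x)) (ENNReal.ofReal c) ≠ ∞ :=
    ((lintegral_mono fun x => min_le_left _ _).trans_lt
      (hw.continuous.integrable_of_hasCompactSupport hwc).lintegral_lt_top).ne
  have := (ENNReal.add_le_add_iff_left hfinite).1 key
  rw [← ENNReal.ofReal_mul (by positivity), mul_assoc, ENNReal.ofReal_mul he.le] at this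
  exact (ENNReal.mul_le_mul_iff_right (ENNReal.ofReal_pos.2 he).ne' ENNReal.ofReal_ne_top).1 this

theorem isoperimetricProfile_mul_le_setLIntegral_norm_fderiv (hn : 0 < n) (hw : ContDiff ℝ 1 w)
    (hwc : HasCompactSupport w) (hm : 0 < m) (hmw : ENNReal.ofReal m ≤ volume {x | c < w x})
    (hc : 0 < c) :
    ENNReal.ofReal (isoperimetricProfile n m * c) ≤ ∫⁻ x in {x | w x < c}, ‖fderiv ℝ w x‖ₑ := by
  have hlim : Tendsto (fun η : ℝ => (∫⁻ x in {x | w x < c}, ‖fderiv ℝ w x‖ₑ) +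
      ENNReal.ofReal η * volume (cthickening 1 (tsupport w))) (𝓝[>] 0)
      (𝓝 ((∫⁻ x in {x | w x < c}, ‖fderiv ℝ w x‖ₑ) +
        ENNReal.ofReal 0 * volume (cthickening 1 (tsupport w)))) :=
    ((ENNReal.Tendsto.mul_const (ENNReal.continuous_ofReal.tendsto 0)
      (Or.inr hwc.isCompact.cthickening.measure_lt_top.ne)).const_add _).mono_left
      nhdsWithin_le_nhds
  rw [ENNReal.ofReal_zero, zero_mul, add_zero] at hlim
  exact ge_of_tendsto hlim (eventually_nhdsWithin_of_forall fun η hη =>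
    isoperimetricProfile_mul_le_setLIntegral_add hn hw hwc hm hmw hc hη)

end IsoperimetricInequality

/-! ### Total variation of smooth functions -/

section IntegrationByParts

variable {n : ℕ} {φ : EuclideanSpace ℝ (Fin n) → EuclideanSpace ℝ (Fin n)}
  {w : EuclideanSpace ℝ (Fin n) → ℝ} {c V : ℝ}

theorem continuous_diverg (hφ : ContDiff ℝ 1 φ) : Continuous (diverg φ) := by
  have := hφ.continuous_fderiv one_ne_zero
  unfold diverg
  fun_prop

theorem hasCompactSupport_diverg (hφc : HasCompactSupport φ) : HasCompactSupport (diverg φ) :=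
  (hφc.fderiv ℝ).mono fun x => mt fun h => by simp [diverg, h]

theorem exists_forall_abs_diverg_le (hφ : ContDiff ℝ 1 φ) (hφc : HasCompactSupport φ) :
    ∃ C, ∀ x, |diverg φ x| ≤ C :=
  (continuous_diverg hφ).bounded_above_of_compact_support (hasCompactSupport_diverg hφc)

theorem lineDeriv_coord (hφ : Differentiable ℝ φ) (i : Fin n) (x v : EuclideanSpace ℝ (Fin n)) :
    lineDeriv ℝ (fun y => φ y i) x v = fderiv ℝ φ x v i :=
  ((EuclideanSpace.proj (𝕜 := ℝ) i).hasFDerivAt.comp x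
    (hφ x).hasFDerivAt).hasLineDerivAt v |>.lineDeriv

theorem integral_mul_diverg_eq_neg_integral_fderiv {K : ℝ≥0} (hw : LipschitzWith K w)
    (hφ : ContDiff ℝ 1 φ) (hφc : HasCompactSupport φ) :
    ∫ x, w x * diverg φ x = -∫ x, fderiv ℝ w x (φ x) := by
  have hφd := hφ.differentiable one_ne_zero
  let e : Fin n → EuclideanSpace ℝ (Fin n) := fun i => EuclideanSpace.single i 1
  have hφi : ∀ i, ContDiff ℝ 1 fun x => φ x i := contDiff_euclidean.1 hφ
  have hφic : ∀ i, HasCompactSupport fun x => φ x i := fun i =>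
    hφc.mono fun x => mt fun h => by simp [h]
  have parts : ∀ i, ∫ x, w x * lineDeriv ℝ (fun y => φ y i) x (e i) =
      -∫ x, lineDeriv ℝ w x (e i) * φ x i := fun i => by
    obtain ⟨D, hD⟩ := (hφi i).lipschitzWith_of_hasCompactSupport (hφic i) one_ne_zero
    simp only [hw.integral_lineDeriv_mul_eq hD (hφic i), lineDeriv_neg, neg_mul, integral_neg,
      neg_neg, mul_comm (w _)]
  have hint : ∀ i, Integrable fun x => w x * lineDeriv ℝ (fun y => φ y i) x (e i) := fun i => by
    simp only [lineDeriv_coord hφd]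
    refine Continuous.integrable_of_hasCompactSupport ?_
      ((hφc.fderiv ℝ).mono fun x => mt fun h => by simp [h])
    have := hφ.continuous_fderiv one_ne_zero
    have := hw.continuous
    fun_prop
  have hint' : ∀ i, Integrable fun x => lineDeriv ℝ w x (e i) * φ x i := fun i =>
    ((hφi i).continuous.integrable_of_hasCompactSupport (hφic i)).bdd_mul
      (aestronglyMeasurable_lineDeriv hw.continuous volume)
      (Eventually.of_forall fun _ => norm_lineDeriv_le_of_lipschitz ℝ hw)
  have hfderiv : ∀ᵐ x, fderiv ℝ w x (φ x) = ∑ i, lineDeriv ℝ w x (e i) * φ x i := by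
    filter_upwards [hw.ae_differentiableAt] with x hx
    conv_lhs => rw [← (EuclideanSpace.basisFun (Fin n) ℝ).sum_repr (φ x)]
    simp [e, hx.lineDeriv_eq_fderiv, mul_comm]
  calc ∫ x, w x * diverg φ x
      = ∑ i, ∫ x, w x * lineDeriv ℝ (fun y => φ y i) x (e i) := by
        rw [← integral_finsetSum _ fun i _ => hint i]
        simp only [diverg, lineDeriv_coord hφd, Finset.mul_sum, e]
    _ = -∑ i, ∫ x, lineDeriv ℝ w x (e i) * φ x i := by
        simp only [parts, Finset.sum_neg_distrib]
    _ = -∫ x, fderiv ℝ w x (φ x) := by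
        rw [integral_congr_ae hfderiv, integral_finsetSum _ fun i _ => hint' i]

theorem fderiv_max_sub_zero {E : Type*} [NormedAddCommGroup E] [NormedSpace ℝ E] {w : E → ℝ}
    (hw : Continuous w) (c : ℝ) (x : E) :
    fderiv ℝ (fun y => max (w y - c) 0) x = {x | c < w x}.indicator (fderiv ℝ w) x := by
  by_cases hx : c < w x
  · have hnear : (fun y => max (w y - c) 0) =ᶠ[𝓝 x] fun y => w y - c :=
      (hw.tendsto x |>.eventually_const_lt hx).mono fun y hy => max_eq_left (sub_pos.2 hy).le
    rw [hnear.fderiv_eq, fderiv_sub_const, indicator_of_mem (show x ∈ {x | c < w x} from hx)]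
  · have hmin : IsLocalMin (fun y => max (w y - c) 0) x := Eventually.of_forall fun y => by
      simp only [max_eq_right (sub_nonpos.2 (not_lt.1 hx)), le_max_right]
    rw [hmin.fderiv_eq_zero, indicator_of_notMem (show x ∉ {x | c < w x} from hx)]

theorem integral_max_sub_mul_diverg_le (hw : ContDiff ℝ 1 w) (hwc : HasCompactSupport w)
    (hφ : ContDiff ℝ 1 φ) (hφc : HasCompactSupport φ) (hφ1 : ∀ x, ‖φ x‖ ≤ 1) (c : ℝ) :
    ∫ x, max (w x - c) 0 * diverg φ x ≤ ∫ x in {x | c < w x}, ‖fderiv ℝ w x‖ := by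
  obtain ⟨K, hK⟩ := hw.lipschitzWith_of_hasCompactSupport hwc one_ne_zero
  have hmeas : MeasurableSet {x | c < w x} :=
    measurableSet_lt measurable_const hw.continuous.measurable
  have hDw : Integrable fun x => ‖fderiv ℝ w x‖ :=
    (hw.continuous_fderiv one_ne_zero).norm.integrable_of_hasCompactSupport (hwc.fderiv ℝ).norm
  rw [integral_mul_diverg_eq_neg_integral_fderiv
    ((hK.sub (LipschitzWith.const c)).max_const 0) hφ hφc, ← integral_indicator hmeas]
  refine (neg_le_abs _).trans ?_
  rw [← Real.norm_eq_abs]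
  refine norm_integral_le_of_norm_le (hDw.indicator hmeas) (Eventually.of_forall fun x => ?_)
  rw [fderiv_max_sub_zero hw.continuous, ← norm_indicator_eq_indicator_norm]
  exact (ContinuousLinearMap.le_opNorm _ _).trans
    (mul_le_of_le_one_right (norm_nonneg _) (hφ1 x))

theorem norm_sub_inv_le_inner_univUnitBall {E : Type*} [NormedAddCommGroup E]
    [InnerProductSpace ℝ E] (y : E) {r : ℝ} (hr : 0 < r) :
    ‖y‖ - r⁻¹ ≤ inner ℝ y (OpenPartialHomeomorph.univUnitBall (r • y)) := by
  have hsqrt : √(1 + ‖r • y‖ ^ 2) ≤ 1 + r * ‖y‖ := by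
    rw [norm_smul, Real.norm_of_nonneg hr.le]
    exact Real.sqrt_le_iff.2 ⟨by positivity, by nlinarith [mul_nonneg hr.le (norm_nonneg y)]⟩
  calc ‖y‖ - r⁻¹ ≤ (1 + r * ‖y‖)⁻¹ * (r * ‖y‖ ^ 2) := by
        rw [inv_mul_eq_div, le_div_iff₀ (by positivity)]
        field_simp
        nlinarith
    _ ≤ (√(1 + ‖r • y‖ ^ 2))⁻¹ * (r * ‖y‖ ^ 2) := by gcongr
    _ = inner ℝ y (OpenPartialHomeomorph.univUnitBall (r • y)) := by
        rw [OpenPartialHomeomorph.univUnitBall_apply, inner_smul_right, inner_smul_right,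
          real_inner_self_eq_norm_sq]

theorem integral_fderiv_apply_le_of_mem_upperBounds {K : ℝ≥0} (hw : LipschitzWith K w)
    (hV : V ∈ upperBounds (varSet w)) (hφ : ContDiff ℝ 1 φ) (hφc : HasCompactSupport φ)
    (hφ1 : ∀ x, ‖φ x‖ ≤ 1) : ∫ x, fderiv ℝ w x (φ x) ≤ V :=
  calc ∫ x, fderiv ℝ w x (φ x) = ∫ x, w x * diverg (fun x => -φ x) x := by
        simp only [integral_mul_diverg_eq_neg_integral_fderiv hw hφ.neg hφc.neg, map_neg,
          integral_neg, neg_neg]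
    _ ≤ V := hV ⟨_, hφ.neg, hφc.neg, fun x => (norm_neg _).trans_le (hφ1 x), rfl⟩

theorem integral_norm_fderiv_le_add_inv_mul (hw : ContDiff ℝ 2 w) (hwc : HasCompactSupport w)
    (hV : V ∈ upperBounds (varSet w)) {r : ℝ} (hr : 0 < r) :
    ∫ x, ‖fderiv ℝ w x‖ ≤ V + r⁻¹ * volume.real (tsupport w) := by
  have hw1 : ContDiff ℝ 1 w := hw.of_le one_le_two
  obtain ⟨K, hK⟩ := hw1.lipschitzWith_of_hasCompactSupport hwc one_ne_zero
  have hDw := hw1.continuous_fderiv one_ne_zero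
  -- `ψ` is a smooth substitute for `∇w / |∇w|`, which is singular where `∇w = 0`.
  let ψ : EuclideanSpace ℝ (Fin n) → EuclideanSpace ℝ (Fin n) := fun x =>
    OpenPartialHomeomorph.univUnitBall (r • gradient w x)
  have hgrad : ContDiff ℝ 1 (gradient w) :=
    (InnerProductSpace.toDual ℝ (EuclideanSpace ℝ (Fin n))).symm.contDiff.comp
      (hw.fderiv_right one_add_one_eq_two.le)
  have hψ : ContDiff ℝ 1 ψ :=
    OpenPartialHomeomorph.contDiff_univUnitBall.comp (hgrad.const_smul r)
  have hψc : HasCompactSupport ψ := (hwc.fderiv ℝ).mono fun x => mt fun h => by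
    simp [ψ, gradient, h]
  have hψ1 : ∀ x, ‖ψ x‖ ≤ 1 := fun x =>
    (mem_ball_zero_iff.1 (OpenPartialHomeomorph.univUnitBall.map_source (mem_univ _))).le
  have hbound : ∀ x, ‖fderiv ℝ w x‖ ≤ fderiv ℝ w x (ψ x) + r⁻¹ := fun x => by
    rw [← sub_le_iff_le_add, ← inner_gradient_left, ← toDual_gradient,
      LinearIsometryEquiv.norm_map]
    exact norm_sub_inv_le_inner_univUnitBall _ hr
  have hψint : Integrable fun x => fderiv ℝ w x (ψ x) :=
    (hDw.clm_apply hψ.continuous).integrable_of_hasCompactSupport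
      (hψc.mono fun x => mt fun h => by simp [h])
  have hconst : IntegrableOn (fun _ => r⁻¹) (tsupport w) :=
    integrableOn_const hwc.isCompact.measure_lt_top.ne
  calc ∫ x, ‖fderiv ℝ w x‖ = ∫ x in tsupport w, ‖fderiv ℝ w x‖ :=
        (setIntegral_eq_integral_of_forall_compl_eq_zero fun x hx => by
          rw [fderiv_of_notMem_tsupport ℝ hx, norm_zero]).symm
    _ ≤ ∫ x in tsupport w, (fderiv ℝ w x (ψ x) + r⁻¹) := setIntegral_mono
        (hDw.norm.integrable_of_hasCompactSupport (hwc.fderiv ℝ).norm).integrableOn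
        (hψint.integrableOn.add hconst) hbound
    _ = (∫ x, fderiv ℝ w x (ψ x)) + r⁻¹ * volume.real (tsupport w) := by
        rw [integral_add hψint.integrableOn hconst, setIntegral_const, smul_eq_mul, mul_comm,
          setIntegral_eq_integral_of_forall_compl_eq_zero fun x hx => by
            rw [fderiv_of_notMem_tsupport ℝ hx, zero_apply]]
    _ ≤ V + r⁻¹ * volume.real (tsupport w) := by
        gcongr
        exact integral_fderiv_apply_le_of_mem_upperBounds hK hV hψ hψc hψ1

theorem integral_norm_fderiv_le_of_mem_upperBounds (hw : ContDiff ℝ 2 w)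
    (hwc : HasCompactSupport w) (hV : V ∈ upperBounds (varSet w)) :
    ∫ x, ‖fderiv ℝ w x‖ ≤ V := by
  have hlim : Tendsto (fun r : ℝ => V + r⁻¹ * volume.real (tsupport w)) atTop (𝓝 V) := by
    simpa using (tendsto_inv_atTop_zero.mul_const (volume.real (tsupport w))).const_add V
  exact ge_of_tendsto hlim ((eventually_gt_atTop 0).mono fun r hr =>
    integral_norm_fderiv_le_add_inv_mul hw hwc hV hr)

end IntegrationByParts

/-! ### Mollification -/

section Convergence

variable {α : Type*} [MeasurableSpace α] {μ : Measure α} {f g : α → ℝ} {F : ℕ → α → ℝ}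

/-- **Scheffé's lemma.** -/
theorem tendsto_integral_abs_sub_zero (hf : Integrable f μ) (hF : ∀ k, Integrable (F k) μ)
    (hF0 : ∀ k x, 0 ≤ F k x) (hint : Tendsto (fun k => ∫ x, F k x ∂μ) atTop (𝓝 (∫ x, f x ∂μ)))
    (hlim : ∀ᵐ x ∂μ, Tendsto (F · x) atTop (𝓝 (f x))) :
    Tendsto (fun k => ∫ x, |F k x - f x| ∂μ) atTop (𝓝 0) := by
  have hdiff : ∀ k, Integrable (fun x => F k x - f x) μ := fun k => (hF k).sub hf
  have hpart : ∀ k, Integrable (fun x => max (f x - F k x) 0) μ := fun k =>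
    (hf.sub (hF k)).pos_part
  have hpos : Tendsto (fun k => ∫ x, max (f x - F k x) 0 ∂μ) atTop (𝓝 (∫ _, 0 ∂μ)) := by
    refine tendsto_integral_of_dominated_convergence (fun x => |f x|)
      (fun k => (hpart k).aestronglyMeasurable) hf.abs
      (fun k => Eventually.of_forall fun x => ?_) ?_
    · rw [Real.norm_of_nonneg (le_max_right _ _)]
      exact max_le ((sub_le_self _ (hF0 k x)).trans (le_abs_self _)) (abs_nonneg _)
    · filter_upwards [hlim] with x hx
      simpa using (hx.const_sub (f x)).max (tendsto_const_nhds (x := (0 : ℝ)))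
  have hsplit : ∀ k, ∫ x, |F k x - f x| ∂μ =
      (∫ x, F k x ∂μ) - (∫ x, f x ∂μ) + 2 * ∫ x, max (f x - F k x) 0 ∂μ := fun k => by
    have habs : ∀ x, |F k x - f x| = F k x - f x + 2 * max (f x - F k x) 0 := fun x => by
      rcases le_total (f x) (F k x) with h | h
      · rw [abs_of_nonneg (sub_nonneg.2 h), max_eq_right (sub_nonpos.2 h), mul_zero, add_zero]
      · rw [abs_of_nonpos (sub_nonpos.2 h), max_eq_left (sub_nonneg.2 h)]
        ring
    simp only [habs]
    rw [integral_add (hdiff k) ((hpart k).const_mul 2),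
      integral_sub (hF k) hf, integral_const_mul]
  simpa only [hsplit, sub_self, integral_zero, mul_zero, add_zero] using
    (hint.sub_const (∫ x, f x ∂μ)).add (hpos.const_mul 2)

theorem integrable_max_sub_zero (hf : Integrable f μ) {c : ℝ} (hc : 0 ≤ c) :
    Integrable (fun x => max (f x - c) 0) μ := by
  refine hf.mono (by fun_prop) (Eventually.of_forall fun x => ?_)
  rw [Real.norm_of_nonneg (le_max_right _ _)]
  exact max_le ((sub_le_self _ hc).trans (Real.le_norm_self _)) (norm_nonneg _)

theorem tendsto_integral_max_sub_mul (hf : Integrable f μ) (hF : ∀ k, Integrable (F k) μ)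
    (hlim : Tendsto (fun k => ∫ x, |F k x - f x| ∂μ) atTop (𝓝 0))
    (hg : AEStronglyMeasurable g μ) {C : ℝ} (hgC : ∀ x, |g x| ≤ C) {c : ℝ} (hc : 0 ≤ c) :
    Tendsto (fun k => ∫ x, max (F k x - c) 0 * g x ∂μ) atTop
      (𝓝 (∫ x, max (f x - c) 0 * g x ∂μ)) := by
  have hint : ∀ {h : α → ℝ}, Integrable h μ → Integrable (fun x => max (h x - c) 0 * g x) μ :=
    fun hh => (integrable_max_sub_zero hh hc).mul_bdd hg (Eventually.of_forall hgC)
  rw [tendsto_iff_norm_sub_tendsto_zero]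
  refine squeeze_zero (fun k => norm_nonneg _) (fun k => ?_)
    (by simpa using hlim.mul_const C)
  rw [← integral_sub (hint (hF k)) (hint hf), ← integral_mul_const]
  refine norm_integral_le_of_norm_le (((hF k).sub hf).abs.mul_const C)
    (Eventually.of_forall fun x => ?_)
  rw [← sub_mul, norm_mul, Real.norm_eq_abs, Real.norm_eq_abs]
  have hlip : |max (F k x - c) 0 - max (f x - c) 0| ≤ |F k x - f x| := by
    simpa using abs_max_sub_max_le_abs (F k x - c) (f x - c) 0
  gcongr
  exact hgC x

theorem eventually_lt_measure_lt (hlim : ∀ᵐ x ∂μ, Tendsto (F · x) atTop (𝓝 (f x))) {c : ℝ}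
    {m : ℝ≥0∞} (hm : m < μ {x | c < f x}) : ∀ᶠ k in atTop, m < μ {x | c < F k x} := by
  let A : ℕ → Set α := fun N => {x | ∀ k ≥ N, c < F k x}
  have hA : Monotone A := fun _ _ hMN _ hx k hk => hx k (hMN.trans hk)
  have hsub : {x | c < f x} ≤ᵐ[μ] ⋃ N, A N := by
    filter_upwards [hlim] with x hx hcx
    exact mem_iUnion.2 (eventually_atTop.1 (hx.eventually_const_lt hcx))
  obtain ⟨N, hN⟩ := lt_iSup_iff.1 (hA.measure_iUnion ▸ hm.trans_le (measure_mono_ae hsub))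
  filter_upwards [eventually_ge_atTop N] with k hk
  exact hN.trans_le (measure_mono fun x hx => hx k hk)

end Convergence

section Mollification

open scoped Convolution

variable {n : ℕ} {f r : EuclideanSpace ℝ (Fin n) → ℝ}

theorem varSet_comp_sub_right_subset (f : EuclideanSpace ℝ (Fin n) → ℝ)
    (z : EuclideanSpace ℝ (Fin n)) : varSet (fun x => f (x - z)) ⊆ varSet f := by
  rintro _ ⟨φ, hφ, hφc, hφ1, rfl⟩
  refine ⟨fun x => φ (x + z), hφ.comp (contDiff_id.add contDiff_const),
    hφc.comp_homeomorph (Homeomorph.addRight z), fun x => hφ1 _, ?_⟩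
  rw [← integral_add_right_eq_self (fun x => f (x - z) * diverg φ x) z]
  simp only [add_sub_cancel_right, diverg, fderiv_comp_add_right]

theorem upperBounds_varSet_subset_convolution (hf : Integrable f) (hr : Integrable r)
    (hr0 : ∀ x, 0 ≤ r x) (hr1 : ∫ x, r x = 1) :
    upperBounds (varSet f) ⊆
      upperBounds (varSet (r ⋆[ContinuousLinearMap.lsmul ℝ ℝ] f)) := by
  rintro V hV _ ⟨φ, hφ, hφc, hφ1, rfl⟩
  obtain ⟨C, hC⟩ := exists_forall_abs_diverg_le hφ hφc
  have hint : Integrable (fun p : EuclideanSpace ℝ (Fin n) × EuclideanSpace ℝ (Fin n) =>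
      r p.2 * f (p.1 - p.2) * diverg φ p.1) (volume.prod volume) :=
    (hr.convolution_integrand (ContinuousLinearMap.lsmul ℝ ℝ) hf).mul_bdd
      ((continuous_diverg hφ).comp continuous_fst).aestronglyMeasurable
      (Eventually.of_forall fun p => hC p.1)
  calc ∫ x, (r ⋆[ContinuousLinearMap.lsmul ℝ ℝ] f) x * diverg φ x
      = ∫ x, ∫ z, r z * f (x - z) * diverg φ x := by
        simp only [convolution_def, ContinuousLinearMap.lsmul_apply, smul_eq_mul,
          integral_mul_const]
    _ = ∫ z, ∫ x, r z * f (x - z) * diverg φ x := integral_integral_swap hint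
    _ = ∫ z, r z * ∫ x, f (x - z) * diverg φ x := by
        simp only [mul_assoc, integral_const_mul]
    _ ≤ ∫ z, r z * V := by
        refine integral_mono ?_ (hr.mul_const V) fun z => mul_le_mul_of_nonneg_left
          (hV (varSet_comp_sub_right_subset f z ⟨φ, hφ, hφc, hφ1, rfl⟩)) (hr0 z)
        simpa only [mul_assoc, integral_const_mul] using hint.integral_prod_right
    _ = V := by rw [integral_mul_const, hr1, one_mul]

/-- The smooth bump function used for mollification at scale `1 / (k + 1)`. The ratio of its radii
does not depend on `k`, as required for almost everywhere convergence. -/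
def mollifier (n k : ℕ) : ContDiffBump (0 : EuclideanSpace ℝ (Fin n)) where
  rIn := 1 / (k + 1)
  rOut := 2 * (1 / (k + 1))
  rIn_pos := Nat.one_div_pos_of_nat
  rIn_lt_rOut := lt_two_mul_self Nat.one_div_pos_of_nat

/-- The `k`-th mollification of `f`. -/
def mollify (k : ℕ) (f : EuclideanSpace ℝ (Fin n) → ℝ) : EuclideanSpace ℝ (Fin n) → ℝ :=
  (mollifier n k).normed volume ⋆[ContinuousLinearMap.lsmul ℝ ℝ] f

theorem contDiff_mollify (k : ℕ) {m : ℕ∞} (hf : LocallyIntegrable f) :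
    ContDiff ℝ m (mollify k f) :=
  (mollifier n k).hasCompactSupport_normed.contDiff_convolution_left _
    (mollifier n k).contDiff_normed hf

theorem hasCompactSupport_mollify (k : ℕ) (hfc : HasCompactSupport f) :
    HasCompactSupport (mollify k f) :=
  (mollifier n k).hasCompactSupport_normed.convolution _ hfc

theorem mollify_nonneg (k : ℕ) (hf0 : ∀ x, 0 ≤ f x) (x : EuclideanSpace ℝ (Fin n)) :
    0 ≤ mollify k f x :=
  integral_nonneg fun t => mul_nonneg ((mollifier n k).nonneg_normed t) (hf0 _)

theorem integrable_mollify (k : ℕ) (hf : Integrable f) : Integrable (mollify k f) :=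
  (mollifier n k).integrable_normed.integrable_convolution _ hf

theorem integral_mollify (k : ℕ) (hf : Integrable f) : ∫ x, mollify k f x = ∫ x, f x := by
  simp [mollify, integral_convolution _ (mollifier n k).integrable_normed hf,
    (mollifier n k).integral_normed]

theorem ae_tendsto_mollify (hf : LocallyIntegrable f) :
    ∀ᵐ x, Tendsto (mollify · f x) atTop (𝓝 (f x)) := by
  refine ContDiffBump.ae_convolution_tendsto_right_of_locallyIntegrable (φ := mollifier n) (K := 2)
    ?_ (Eventually.of_forall fun k => le_rfl) hf
  simpa [mollifier] using (tendsto_one_div_add_atTop_nhds_zero_nat (𝕜 := ℝ)).const_mul 2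

theorem tendsto_integral_abs_mollify_sub (hf : Integrable f) (hf0 : ∀ x, 0 ≤ f x) :
    Tendsto (fun k => ∫ x, |mollify k f x - f x|) atTop (𝓝 0) :=
  tendsto_integral_abs_sub_zero hf (integrable_mollify · hf) (mollify_nonneg · hf0)
    (by simp only [integral_mollify _ hf, tendsto_const_nhds])
    (ae_tendsto_mollify hf.locallyIntegrable)

theorem integral_norm_fderiv_mollify_le (k : ℕ) (hf : Integrable f) (hfc : HasCompactSupport f)
    {V : ℝ} (hV : V ∈ upperBounds (varSet f)) : ∫ x, ‖fderiv ℝ (mollify k f) x‖ ≤ V :=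
  integral_norm_fderiv_le_of_mem_upperBounds (contDiff_mollify k hf.locallyIntegrable)
    (hasCompactSupport_mollify k hfc) (upperBounds_varSet_subset_convolution hf
      (mollifier n k).integrable_normed (mollifier n k).nonneg_normed
      (mollifier n k).integral_normed hV)

end Mollification

/-! ### Truncation of functions of bounded variation -/

section Truncation

variable {n : ℕ} {f u w : EuclideanSpace ℝ (Fin n) → ℝ}
  {φ : EuclideanSpace ℝ (Fin n) → EuclideanSpace ℝ (Fin n)} {a b c d m V : ℝ}

theorem integral_max_sub_mul_diverg_add_le_integral_norm_fderiv (hn : 0 < n)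
    (hw : ContDiff ℝ 1 w) (hwc : HasCompactSupport w) (hφ : ContDiff ℝ 1 φ)
    (hφc : HasCompactSupport φ) (hφ1 : ∀ x, ‖φ x‖ ≤ 1) (hd : 0 < d) (hdc : d ≤ c) (hm : 0 < m)
    (hmw : ENNReal.ofReal m ≤ volume {x | d < w x}) :
    (∫ x, max (w x - c) 0 * diverg φ x) + isoperimetricProfile n m * d ≤
      ∫ x, ‖fderiv ℝ w x‖ := by
  have hint : Integrable (fderiv ℝ w) :=
    (hw.continuous_fderiv one_ne_zero).integrable_of_hasCompactSupport (hwc.fderiv ℝ)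
  have hlow : isoperimetricProfile n m * d ≤ ∫ x in {x | w x < d}, ‖fderiv ℝ w x‖ := by
    rw [integral_norm_eq_lintegral_enorm hint.aestronglyMeasurable.restrict,
      ← ENNReal.ofReal_le_iff_le_toReal hint.integrableOn.2.ne]
    exact isoperimetricProfile_mul_le_setLIntegral_norm_fderiv hn hw hwc hm hmw hd
  calc (∫ x, max (w x - c) 0 * diverg φ x) + isoperimetricProfile n m * d
      ≤ (∫ x in {x | c < w x}, ‖fderiv ℝ w x‖) + ∫ x in {x | w x < d}, ‖fderiv ℝ w x‖ :=
        add_le_add (integral_max_sub_mul_diverg_le hw hwc hφ hφc hφ1 c) hlow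
    _ = ∫ x in {x | c < w x} ∪ {x | w x < d}, ‖fderiv ℝ w x‖ :=
        (setIntegral_union
          (Set.disjoint_left.2 fun x (hcw : c < w x) (hwd : w x < d) =>
            (hdc.trans_lt hcw).not_gt hwd)
          (measurableSet_lt hw.continuous.measurable measurable_const)
          hint.norm.integrableOn hint.norm.integrableOn).symm
    _ ≤ ∫ x, ‖fderiv ℝ w x‖ :=
        setIntegral_le_integral hint.norm (Eventually.of_forall fun _ => norm_nonneg _)

theorem integral_max_sub_mul_diverg_add_le_of_eventually_mollify (hf : Integrable f)
    (hf0 : ∀ x, 0 ≤ f x) (hφ : ContDiff ℝ 1 φ) (hφc : HasCompactSupport φ) (hc : 0 ≤ c)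
    (hV : ∀ᶠ k in atTop, (∫ x, max (mollify k f x - c) 0 * diverg φ x) + d ≤ V) :
    (∫ x, max (f x - c) 0 * diverg φ x) + d ≤ V :=
  have ⟨_, hC⟩ := exists_forall_abs_diverg_le hφ hφc
  le_of_tendsto ((tendsto_integral_max_sub_mul hf (integrable_mollify · hf)
    (tendsto_integral_abs_mollify_sub hf hf0) (continuous_diverg hφ).aestronglyMeasurable hC
    hc).add_const d) hV

theorem upperBounds_varSet_subset_max_sub_zero (hf : Integrable f) (hfc : HasCompactSupport f)
    (hf0 : ∀ x, 0 ≤ f x) (hc : 0 ≤ c) :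
    upperBounds (varSet f) ⊆ upperBounds (varSet fun x => max (f x - c) 0) := by
  rintro V hV _ ⟨φ, hφ, hφc, hφ1, rfl⟩
  rw [← add_zero (∫ x, _)]
  refine integral_max_sub_mul_diverg_add_le_of_eventually_mollify hf hf0 hφ hφc hc
    (Eventually.of_forall fun k => ?_)
  have hw : ContDiff ℝ 1 (mollify k f) := contDiff_mollify k hf.locallyIntegrable
  have hwc := hasCompactSupport_mollify k hfc
  calc (∫ x, max (mollify k f x - c) 0 * diverg φ x) + 0
      ≤ ∫ x in {x | c < mollify k f x}, ‖fderiv ℝ (mollify k f) x‖ := by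
        rw [add_zero]
        exact integral_max_sub_mul_diverg_le hw hwc hφ hφc hφ1 c
    _ ≤ ∫ x, ‖fderiv ℝ (mollify k f) x‖ := setIntegral_le_integral
        ((hw.continuous_fderiv one_ne_zero).norm.integrable_of_hasCompactSupport
          (hwc.fderiv ℝ).norm) (Eventually.of_forall fun _ => norm_nonneg _)
    _ ≤ V := integral_norm_fderiv_mollify_le k hf hfc hV

theorem add_isoperimetricProfile_mul_le_of_mem_varSet (hn : 0 < n) (hf : Integrable f)
    (hfc : HasCompactSupport f) (hf0 : ∀ x, 0 ≤ f x) (hV : V ∈ upperBounds (varSet f))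
    (hc : 0 < c) (hm : 0 < m) (hlev : ∀ t ∈ Ioo 0 c, ENNReal.ofReal m < volume {x | t < f x})
    {p : ℝ} (hp : p ∈ varSet fun x => max (f x - c) 0) :
    p + isoperimetricProfile n m * c ≤ V := by
  obtain ⟨φ, hφ, hφc, hφ1, rfl⟩ := hp
  have hlim : Tendsto (fun d => (∫ x, max (f x - c) 0 * diverg φ x) + isoperimetricProfile n m * d)
      (𝓝[<] c) (𝓝 ((∫ x, max (f x - c) 0 * diverg φ x) + isoperimetricProfile n m * c)) :=
    (Continuous.tendsto (by fun_prop) c).mono_left nhdsWithin_le_nhds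
  refine le_of_tendsto hlim (mem_of_superset (Ioo_mem_nhdsLT hc) fun d hd => ?_)
  refine integral_max_sub_mul_diverg_add_le_of_eventually_mollify hf hf0 hφ hφc hc.le ?_
  filter_upwards [eventually_lt_measure_lt (ae_tendsto_mollify hf.locallyIntegrable) (hlev d hd)]
    with k hk
  exact (integral_max_sub_mul_diverg_add_le_integral_norm_fderiv hn
    (contDiff_mollify k hf.locallyIntegrable) (hasCompactSupport_mollify k hfc) hφ hφc hφ1
    hd.1 hd.2.le hm hk.le).trans (integral_norm_fderiv_mollify_le k hf hfc hV)

theorem zero_mem_varSet (f : EuclideanSpace ℝ (Fin n) → ℝ) : (0 : ℝ) ∈ varSet f :=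
  ⟨0, contDiff_const, HasCompactSupport.zero, by simp, by simp [diverg]⟩

theorem totalVar_nonneg (f : EuclideanSpace ℝ (Fin n) → ℝ) : 0 ≤ totalVar f :=
  Real.sSup_nonneg' ⟨0, zero_mem_varSet f, le_rfl⟩

theorem IsBV.totalVar_mem_upperBounds (hu : IsBV u) : totalVar u ∈ upperBounds (varSet u) :=
  fun _ hp => le_csSup hu.2 hp

theorem IsBV.max_sub_zero (hu : IsBV u) (huc : HasCompactSupport u) (hu0 : ∀ x, 0 ≤ u x)
    (ha : 0 ≤ a) : IsBV fun x => max (u x - a) 0 :=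
  ⟨integrable_max_sub_zero hu.1 ha, totalVar u,
    upperBounds_varSet_subset_max_sub_zero hu.1 huc hu0 ha hu.totalVar_mem_upperBounds⟩

theorem IsBV.totalVar_max_sub_zero_le (hu : IsBV u) (huc : HasCompactSupport u)
    (hu0 : ∀ x, 0 ≤ u x) (ha : 0 ≤ a) : totalVar (fun x => max (u x - a) 0) ≤ totalVar u :=
  csSup_le ⟨0, zero_mem_varSet _⟩
    (upperBounds_varSet_subset_max_sub_zero hu.1 huc hu0 ha hu.totalVar_mem_upperBounds)

theorem IsBV.totalVar_max_sub_zero_add_le (hn : 0 < n) (hu : IsBV u) (huc : HasCompactSupport u)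
    (hu0 : ∀ x, 0 ≤ u x) (ha : 0 ≤ a) (hab : a < b) (hm : 0 < m)
    (hlev : ∀ t ∈ Ioo a b, ENNReal.ofReal m < volume {x | t < u x}) :
    totalVar (fun x => max (u x - b) 0) + isoperimetricProfile n m * (b - a) ≤
      totalVar fun x => max (u x - a) 0 := by
  have hua := hu.max_sub_zero huc hu0 ha
  have htrunc : (fun x => max (max (u x - a) 0 - (b - a)) 0) = fun x => max (u x - b) 0 := by
    funext x
    rw [← max_sub_sub_right, sub_sub_sub_cancel_right, zero_sub, neg_sub, max_assoc,
      max_eq_right (sub_nonpos.2 hab.le)]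
  have hlev' : ∀ t ∈ Ioo 0 (b - a), ENNReal.ofReal m < volume {x | t < max (u x - a) 0} :=
    fun t ht => (hlev (t + a) ⟨by linarith [ht.1], by linarith [ht.2]⟩).trans_le
      (measure_mono fun x (hx : t + a < u x) => lt_max_of_lt_left (lt_sub_iff_add_lt.2 hx))
  rw [← le_sub_iff_add_le, ← htrunc]
  exact csSup_le ⟨0, zero_mem_varSet _⟩ fun p hp => le_sub_iff_add_le.2 <|
    add_isoperimetricProfile_mul_le_of_mem_varSet hn hua.1
      (huc.comp_left (g := fun y => max (y - a) 0) (by simpa using ha))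
      (fun x => le_max_right _ _) hua.totalVar_mem_upperBounds (sub_pos.2 hab) hm hlev' hp

end Truncation

/-! ### The decreasing rearrangement and its comparison function -/

section DecreasingRearrangement

variable {α : Type*} [MeasurableSpace α] {μ : Measure α} {g : α → ℝ} {s t : ℝ}

theorem decRearr_nonneg (μ : Measure α) (g : α → ℝ) (s : ℝ) : 0 ≤ decRearr μ g s :=
  Real.sInf_nonneg fun _ ht => ht.1.le

theorem decRearr_le (ht : 0 < t) (h : μ {x | t < |g x|} ≤ ENNReal.ofReal s) :
    decRearr μ g s ≤ t :=
  csInf_le ⟨0, fun _ ht => ht.1.le⟩ ⟨ht, h⟩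

theorem ofReal_lt_measure_of_lt_decRearr (ht : 0 < t) (h : t < decRearr μ g s) :
    ENNReal.ofReal s < μ {x | t < |g x|} := by
  contrapose! h
  exact decRearr_le ht h

theorem exists_pos_measure_lt_abs_le (hg : Integrable g μ) (hs : 0 < s) :
    ∃ t, 0 < t ∧ μ {x | t < |g x|} ≤ ENNReal.ofReal s := by
  have ht : 0 < ((∫⁻ x, ‖g x‖ₑ ∂μ).toReal + 1) / s := by positivity
  refine ⟨((∫⁻ x, ‖g x‖ₑ ∂μ).toReal + 1) / s, ht, ?_⟩
  set t := ((∫⁻ x, ‖g x‖ₑ ∂μ).toReal + 1) / s with ht_def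
  rw [← ENNReal.mul_le_mul_iff_right (ENNReal.ofReal_pos.2 ht).ne' ENNReal.ofReal_ne_top]
  calc ENNReal.ofReal t * μ {x | t < |g x|}
      ≤ ENNReal.ofReal t * μ {x | ENNReal.ofReal t ≤ ‖g x‖ₑ} := by
        gcongr with x
        intro hx
        rw [Real.enorm_eq_ofReal_abs]
        exact ENNReal.ofReal_le_ofReal hx.le
    _ ≤ ∫⁻ x, ‖g x‖ₑ ∂μ := mul_meas_ge_le_lintegral₀ hg.1.enorm _
    _ ≤ ENNReal.ofReal ((∫⁻ x, ‖g x‖ₑ ∂μ).toReal + 1) :=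
        ENNReal.le_ofReal_iff_toReal_le hg.2.ne (by positivity) |>.2 (le_add_of_nonneg_right
          zero_le_one)
    _ = ENNReal.ofReal t * ENNReal.ofReal s := by
        rw [← ENNReal.ofReal_mul ht.le, ht_def, div_mul_cancel₀ _ hs.ne']

theorem decRearr_antitoneOn (hg : Integrable g μ) : AntitoneOn (decRearr μ g) (Ioi 0) :=
  fun _ hs _ _ hst => csInf_le_csInf ⟨0, fun _ ht => ht.1.le⟩ (exists_pos_measure_lt_abs_le hg hs)
    fun _ ht => ⟨ht.1, ht.2.trans (ENNReal.ofReal_le_ofReal hst)⟩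

theorem decRearr_eq_zero (h : μ (Function.support g) ≤ ENNReal.ofReal s) :
    decRearr μ g s = 0 :=
  le_antisymm (le_of_forall_gt_imp_ge_of_dense fun _ he => decRearr_le he <|
    (measure_mono fun _ hx => abs_pos.1 (lt_trans he hx)).trans h) (decRearr_nonneg μ g s)

theorem eventually_decRearr_eq_zero (h : μ (Function.support g) ≠ ∞) :
    ∀ᶠ s in atTop, decRearr μ g s = 0 :=
  (eventually_ge_atTop (μ (Function.support g)).toReal).mono fun _ hs =>
    decRearr_eq_zero (ENNReal.le_ofReal_iff_toReal_le h (ENNReal.toReal_nonneg.trans hs) |>.2 hs)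

variable {n : ℕ} {u : EuclideanSpace ℝ (Fin n) → ℝ}

theorem IsBV.totalVar_max_sub_decRearr_add_le (hn : 0 < n) (hu : IsBV u)
    (huc : HasCompactSupport u) (hu0 : ∀ x, 0 ≤ u x) (hs : 0 < s) (hst : s ≤ t) :
    totalVar (fun x => max (u x - decRearr volume u s) 0) +
        isoperimetricProfile n s * (decRearr volume u s - decRearr volume u t) ≤
      totalVar fun x => max (u x - decRearr volume u t) 0 := by
  rcases (decRearr_antitoneOn hu.1 hs (hs.trans_le hst) hst).eq_or_lt with heq | hlt
  · rw [heq, sub_self, mul_zero, add_zero]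
  · refine hu.totalVar_max_sub_zero_add_le hn huc hu0 (decRearr_nonneg _ _ _) hlt hs fun r hr => ?_
    simpa only [abs_of_nonneg (hu0 _)] using
      ofReal_lt_measure_of_lt_decRearr ((decRearr_nonneg _ _ _).trans_lt hr.1) hr.2

end DecreasingRearrangement

section GeometricSummation

variable {D P : ℝ → ℝ} {σ : Measure ℝ} {s r : ℝ}

theorem ofReal_sub_le_mul_lintegral_Ioc (hP0 : ∀ t, 0 < t → 0 < P t)
    (hP : MonotoneOn P (Ioi 0)) (hPr : P (s * r) ≤ r * P s)
    (hD : ENNReal.ofReal (P s * (D s - D (s * r))) ≤ σ (Ioc s (s * r))) (hs : 0 < s)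
    (hr : 1 < r) :
    ENNReal.ofReal (D s - D (s * r)) ≤
      ENNReal.ofReal r * ∫⁻ τ in Ioc s (s * r), ENNReal.ofReal (P τ)⁻¹ ∂σ := by
  have hr0 : 0 < r := one_pos.trans hr
  have hPs : (P s)⁻¹ ≤ r * (P (s * r))⁻¹ := by
    rw [← div_eq_mul_inv, inv_le_comm₀ (hP0 s hs) (div_pos hr0 (hP0 _ (mul_pos hs hr0))), inv_div,
      div_le_iff₀' hr0]
    exact hPr
  calc ENNReal.ofReal (D s - D (s * r))
      = ENNReal.ofReal (P s)⁻¹ * ENNReal.ofReal (P s * (D s - D (s * r))) := by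
        rw [← ENNReal.ofReal_mul (inv_pos.2 (hP0 s hs)).le, inv_mul_cancel_left₀ (hP0 s hs).ne']
    _ ≤ ENNReal.ofReal (r * (P (s * r))⁻¹) * σ (Ioc s (s * r)) :=
        mul_le_mul' (ENNReal.ofReal_le_ofReal hPs) hD
    _ = ENNReal.ofReal r * ∫⁻ _ in Ioc s (s * r), ENNReal.ofReal (P (s * r))⁻¹ ∂σ := by
        rw [ENNReal.ofReal_mul hr0.le, mul_assoc, setLIntegral_const]
    _ ≤ ENNReal.ofReal r * ∫⁻ τ in Ioc s (s * r), ENNReal.ofReal (P τ)⁻¹ ∂σ := by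
        gcongr ENNReal.ofReal r * ?_
        refine setLIntegral_mono' measurableSet_Ioc fun τ hτ => ENNReal.ofReal_le_ofReal ?_
        have hτ0 : 0 < τ := hs.trans hτ.1
        exact inv_anti₀ (hP0 τ hτ0) (hP hτ0 (hτ0.trans_le hτ.2) hτ.2)

theorem ofReal_sub_pow_le_mul_lintegral_Ioc (hP0 : ∀ t, 0 < t → 0 < P t)
    (hP : MonotoneOn P (Ioi 0)) (hPr : ∀ t, 0 < t → P (t * r) ≤ r * P t)
    (hD : ∀ s t, 0 < s → s ≤ t → ENNReal.ofReal (P s * (D s - D t)) ≤ σ (Ioc s t)) (hs : 0 < s)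
    (hr : 1 < r) (N : ℕ) :
    ENNReal.ofReal (D s - D (s * r ^ N)) ≤
      ENNReal.ofReal r * ∫⁻ τ in Ioc s (s * r ^ N), ENNReal.ofReal (P τ)⁻¹ ∂σ := by
  induction N with
  | zero => simp
  | succ N ih =>
    have hsN : 0 < s * r ^ N := mul_pos hs (pow_pos (one_pos.trans hr) N)
    have hle : s * r ^ N ≤ s * r ^ N * r := le_mul_of_one_le_right hsN.le hr.le
    rw [pow_succ, ← mul_assoc]
    calc ENNReal.ofReal (D s - D (s * r ^ N * r))
        ≤ ENNReal.ofReal (D s - D (s * r ^ N)) +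
            ENNReal.ofReal (D (s * r ^ N) - D (s * r ^ N * r)) := by
          rw [← sub_add_sub_cancel]
          exact ENNReal.ofReal_add_le
      _ ≤ ENNReal.ofReal r * (∫⁻ τ in Ioc s (s * r ^ N), ENNReal.ofReal (P τ)⁻¹ ∂σ) +
            ENNReal.ofReal r *
              ∫⁻ τ in Ioc (s * r ^ N) (s * r ^ N * r), ENNReal.ofReal (P τ)⁻¹ ∂σ :=
          add_le_add ih
            (ofReal_sub_le_mul_lintegral_Ioc hP0 hP (hPr _ hsN) (hD _ _ hsN hle) hsN hr)
      _ = ENNReal.ofReal r * ∫⁻ τ in Ioc s (s * r ^ N * r), ENNReal.ofReal (P τ)⁻¹ ∂σ := by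
          rw [← mul_add, ← lintegral_union measurableSet_Ioc (Ioc_disjoint_Ioc_of_le le_rfl),
            Ioc_union_Ioc_eq_Ioc (le_mul_of_one_le_right hs.le (one_le_pow₀ hr.le)) hle]

theorem ofReal_le_lintegral_Ioi_inv (hP0 : ∀ t, 0 < t → 0 < P t) (hP : MonotoneOn P (Ioi 0))
    (hPr : ∀ t r, 0 < t → 1 < r → P (t * r) ≤ r * P t)
    (hD : ∀ s t, 0 < s → s ≤ t → ENNReal.ofReal (P s * (D s - D t)) ≤ σ (Ioc s t))
    (hD0 : ∀ᶠ t in atTop, D t = 0) (hs : 0 < s) :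
    ENNReal.ofReal (D s) ≤ ∫⁻ τ in Ioi s, ENNReal.ofReal (P τ)⁻¹ ∂σ := by
  have hlim : Tendsto (fun r => ENNReal.ofReal r * ∫⁻ τ in Ioi s, ENNReal.ofReal (P τ)⁻¹ ∂σ)
      (𝓝[>] 1) (𝓝 (ENNReal.ofReal 1 * ∫⁻ τ in Ioi s, ENNReal.ofReal (P τ)⁻¹ ∂σ)) :=
    ENNReal.Tendsto.mul_const (ENNReal.tendsto_ofReal nhdsWithin_le_nhds) (Or.inl (by simp))
  rw [ENNReal.ofReal_one, one_mul] at hlim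
  refine ge_of_tendsto hlim (eventually_mem_nhdsWithin.mono fun r (hr : 1 < r) => ?_)
  obtain ⟨N, hN⟩ := (((tendsto_pow_atTop_atTop_of_one_lt hr).const_mul_atTop hs).eventually
    hD0).exists
  calc ENNReal.ofReal (D s) = ENNReal.ofReal (D s - D (s * r ^ N)) := by rw [hN, sub_zero]
    _ ≤ ENNReal.ofReal r * ∫⁻ τ in Ioc s (s * r ^ N), ENNReal.ofReal (P τ)⁻¹ ∂σ :=
        ofReal_sub_pow_le_mul_lintegral_Ioc hP0 hP (hPr · r · hr) hD hs hr N
    _ ≤ ENNReal.ofReal r * ∫⁻ τ in Ioi s, ENNReal.ofReal (P τ)⁻¹ ∂σ := by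
        gcongr
        exact Ioc_subset_Ioi_self

end GeometricSummation

section VariationMeasure

variable {n : ℕ} {u : EuclideanSpace ℝ (Fin n) → ℝ} {σ : Measure ℝ} {s t : ℝ}

theorem IsBV.ofReal_isoperimetricProfile_mul_sub_le (hn : 0 < n) (hu : IsBV u)
    (huc : HasCompactSupport u) (hu0 : ∀ x, 0 ≤ u x)
    (hσ : ∀ s, 0 < s → σ (Ioc 0 s) =
      ENNReal.ofReal (totalVar fun x => max (u x - decRearr volume u s) 0))
    (hs : 0 < s) (hst : s ≤ t) :
    ENNReal.ofReal (isoperimetricProfile n s * (decRearr volume u s - decRearr volume u t)) ≤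
      σ (Ioc s t) := by
  have hle : 0 ≤ isoperimetricProfile n s * (decRearr volume u s - decRearr volume u t) :=
    mul_nonneg (isoperimetricProfile_pos hn hs).le
      (sub_nonneg.2 (decRearr_antitoneOn hu.1 hs (hs.trans_le hst) hst))
  have hsplit : σ (Ioc 0 t) = σ (Ioc 0 s) + σ (Ioc s t) := by
    rw [← Ioc_union_Ioc_eq_Ioc hs.le hst,
      measure_union (Ioc_disjoint_Ioc_of_le le_rfl) measurableSet_Ioc]
  refine (ENNReal.add_le_add_iff_left (a := σ (Ioc 0 s)) (by simp [hσ s hs])).1 ?_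
  rw [← hsplit, hσ s hs, hσ t (hs.trans_le hst), ← ENNReal.ofReal_add (totalVar_nonneg _) hle]
  exact ENNReal.ofReal_le_ofReal (hu.totalVar_max_sub_decRearr_add_le hn huc hu0 hs hst)

theorem IsBV.measure_Ioi_zero_le (hu : IsBV u) (huc : HasCompactSupport u) (hu0 : ∀ x, 0 ≤ u x)
    (hσ : ∀ s, 0 < s → σ (Ioc 0 s) =
      ENNReal.ofReal (totalVar fun x => max (u x - decRearr volume u s) 0)) :
    σ (Ioi 0) ≤ ENNReal.ofReal (totalVar u) := by
  have hmono : Monotone fun k : ℕ => Ioc (0 : ℝ) (k + 1) := fun i j hij =>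
    Ioc_subset_Ioc_right (by gcongr)
  rw [← iUnion_Ioc_eq_Ioi_self_iff.2 fun x (_ : 0 < x) =>
      (exists_nat_ge x).imp fun k hk => hk.trans (le_add_of_nonneg_right zero_le_one),
    hmono.measure_iUnion]
  refine iSup_le fun k => ?_
  rw [hσ _ k.cast_add_one_pos]
  exact ENNReal.ofReal_le_ofReal
    (hu.totalVar_max_sub_zero_le huc hu0 (decRearr_nonneg _ _ _))

theorem setLIntegral_Ioi_inv_isoperimetricProfile_ne_top (hn : 0 < n) (hσ : σ (Ioi 0) ≠ ∞)
    (hs : 0 < s) : ∫⁻ τ in Ioi s, ENNReal.ofReal (isoperimetricProfile n τ)⁻¹ ∂σ ≠ ∞ :=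
  (setLIntegral_lt_top_of_le_nnreal (measure_ne_top_of_subset (Ioi_subset_Ioi hs.le) hσ)
    ⟨(isoperimetricProfile n s)⁻¹.toNNReal, fun _ hτ => ENNReal.ofReal_le_ofReal <|
      inv_anti₀ (isoperimetricProfile_pos hn hs) <|
        isoperimetricProfile_monotoneOn n hs.le (hs.le.trans (le_of_lt hτ)) (le_of_lt hτ)⟩).ne

theorem setIntegral_Ioi_inv_isoperimetricProfile (hn : 0 < n) (hs : 0 < s) (σ : Measure ℝ) :
    ∫ τ in Ioi s, (isoperimetricProfile n τ)⁻¹ ∂σ =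
      (∫⁻ τ in Ioi s, ENNReal.ofReal (isoperimetricProfile n τ)⁻¹ ∂σ).toReal := by
  refine integral_eq_lintegral_of_nonneg_ae ?_ ?_
  · exact (ae_restrict_mem measurableSet_Ioi).mono fun τ hτ =>
      inv_nonneg.2 (isoperimetricProfile_pos hn (hs.trans hτ)).le
  · unfold isoperimetricProfile
    exact Measurable.aestronglyMeasurable (by fun_prop)

end VariationMeasure

theorem rearrangement_pointwise_comparison_general {n : ℕ} (hn : 0 < n)
    {u : EuclideanSpace ℝ (Fin n) → ℝ} (hu : IsBV u) (hu_nonneg : ∀ x, 0 ≤ u x)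
    (hu_supp : HasCompactSupport u) {σ : Measure ℝ}
    (hσ : ∀ s, 0 < s → σ (Ioc 0 s) =
      ENNReal.ofReal (totalVar fun x => max (u x - decRearr volume u s) 0))
    {s : ℝ} (hs : 0 < s) :
    decRearr volume u s ≤
      ∫ τ in Ioi s, (n * omegaN n ^ ((1 : ℝ) / n) * τ ^ (1 - (1 : ℝ) / n))⁻¹ ∂σ := by
  have hfin : volume (Function.support u) ≠ ∞ :=
    measure_ne_top_of_subset (subset_tsupport u) hu_supp.measure_lt_top.ne
  have hσ_fin : σ (Ioi 0) ≠ ∞ :=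
    ((hu.measure_Ioi_zero_le hu_supp hu_nonneg hσ).trans_lt ENNReal.ofReal_lt_top).ne
  change _ ≤ ∫ τ in Ioi s, (isoperimetricProfile n τ)⁻¹ ∂σ
  rw [setIntegral_Ioi_inv_isoperimetricProfile hn hs, ← ENNReal.ofReal_le_iff_le_toReal
    (setLIntegral_Ioi_inv_isoperimetricProfile_ne_top hn hσ_fin hs)]
  exact ofReal_le_lintegral_Ioi_inv (fun _ ht => isoperimetricProfile_pos hn ht)
    ((isoperimetricProfile_monotoneOn n).mono Ioi_subset_Ici_self)
    (fun _ _ ht hr => isoperimetricProfile_mul_le n ht.le hr.le)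
    (fun _ _ ht htr => hu.ofReal_isoperimetricProfile_mul_sub_le hn hu_supp hu_nonneg hσ ht htr)
    (eventually_decRearr_eq_zero hfin) hs

theorem rearrangement_pointwise_comparison {n : ℕ} (hn : 0 < n)
    (Ω : Set (EuclideanSpace ℝ (Fin n))) (hΩo : IsOpen Ω)
    (hΩb : Bornology.IsBounded Ω) (hΩp : HasFinPerim Ω)
    (u : EuclideanSpace ℝ (Fin n) → ℝ) (hu : IsBV u)
    (hu_nonneg : ∀ x, 0 ≤ u x) (hu_zero : ∀ x ∉ Ω, u x = 0)
    -- `G s = |D (u - u*(s))₊|(ℝⁿ)`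
    (G : ℝ → ℝ)
    (hG : ∀ s, G s = totalVar (fun x => max (u x - decRearr volume u s) 0))
    -- `σ` is the positive measure with `G s = σ((0,s])` for all `s ≥ 0`
    (σ : Measure ℝ) (hσ : ∀ s, 0 ≤ s → σ (Set.Ioc 0 s) = ENNReal.ofReal (G s))
    -- `v(s) = ∫_{(s,∞)} (n ωₙ^{1/n} τ^{1-1/n})⁻¹ dσ(τ)`
    (v : ℝ → ℝ)
    (hv : ∀ s, v s =
      ∫ τ in Set.Ioi s, (n * omegaN n ^ ((1 : ℝ) / n) * τ ^ (1 - (1 : ℝ) / n))⁻¹ ∂σ) :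
    ∀ᵐ s ∂(volume.restrict (Set.Ici (0 : ℝ))), decRearr volume u s ≤ v s := by
  simp_rw [hv, ← restrict_Ioi_eq_restrict_Ici]
  have hu_supp := HasCompactSupport.intro hΩb.isCompact_closure fun x hx =>
    hu_zero x fun h => hx (subset_closure h)
  exact ae_restrict_of_forall_mem measurableSet_Ioi fun s hs =>
    rearrangement_pointwise_comparison_general hn hu hu_nonneg hu_supp
      (fun t ht => by rw [hσ t ht.le, hG]) hs
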